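/- arXiv:2404.04822 — 2 statements merged into one kernel-verified Lean document; each statement's English description precedes it below -/
import Mathlib

section
/- On the lexicographic domain ℒ, every rule satisfying drop strategy-proofness (DSP) and the worst-endowment lower bound (WELB) also satisfies subset-drop strategy-proofness (SDSP). -/
attribute [local instance] Classical.propDecidable

namespace Realloc

/-- A strict preference over bundles: a strict total order on `Finset O`. -/
structure Pref (O : Type) : Type where
  strict : Finset O → Finset O → Prop
  total : ∀ X Y : Finset O, strict X Y ∨ X = Y ∨ strict Y X
  irrefl : ∀ X : Finset O, ¬ strict X X
  trans : ∀ X Y Z : Finset O, strict X Y → strict Y Z → strict X Z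

/-- The weak ("at least as good as") relation associated with a strict preference. -/
def Pref.weak {O : Type} (p : Pref O) (X Y : Finset O) : Prop :=
  p.strict X Y ∨ X = Y

/-- An allocation: nonempty pairwise disjoint bundles whose union is all of `O`. -/
structure Allocation (N O : Type) : Type where
  bundle : N → Finset O
  nonempty : ∀ i : N, (bundle i).Nonempty
  disj : ∀ i j : N, i ≠ j → ∀ o : O, o ∈ bundle i → o ∉ bundle j
  cover : ∀ o : O, ∃ i : N, o ∈ bundle i

variable {N O : Type}

/-- Two preferences induce the same marginal (singleton) ranking over objects. -/
def MargEq (p q : Pref O) : Prop :=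
  ∀ x y : O, p.strict {x} {y} ↔ q.strict {x} {y}

/-- Responsive preferences. -/
def Responsive [DecidableEq O] (p : Pref O) : Prop :=
  ∀ (X : Finset O) (y z : O), y ∉ X → z ∉ X →
    (p.strict (insert y X) (insert z X) ↔ p.strict {y} {z})

/-- Lexicographic preferences: `X` is preferred to `Y` iff the best object of the
symmetric difference belongs to `X`. -/
def Lexicographic [DecidableEq O] (p : Pref O) : Prop :=
  ∀ X Y : Finset O, X ≠ Y →
    (p.strict X Y ↔
      ∃ x ∈ X \ Y, ∀ y ∈ (X \ Y) ∪ (Y \ X), y ≠ x → p.strict {x} {y})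

/-- Conditionally lexicographic preferences. -/
def CondLex [DecidableEq O] (p : Pref O) : Prop :=
  ∀ X Y : Finset O, Disjoint X Y → X.Nonempty →
    ∃! x : O, x ∈ X ∧ ∀ Z : Finset O, Z ⊆ X.erase x → p.strict (insert x Y) (Y ∪ Z)

/-- Monotonic preferences. -/
def Monot (p : Pref O) : Prop :=
  ∀ X Y : Finset O, Y ⊆ X → p.weak X Y

/-- `p'` is a subset-drop strategy for `p` (relative to endowment `ωi`):
some set `X ⊆ O ∖ ωi` is moved to the bottom of the marginal ranking, preserving
the relative marginal order within `X` and within its complement. -/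
def SubsetDropStrategy (ωi : Finset O) (p p' : Pref O) : Prop :=
  ∃ X : Set O, (∀ x ∈ X, x ∉ ωi) ∧
    (∀ x ∈ X, ∀ y ∈ X, (p.strict {x} {y} ↔ p'.strict {x} {y})) ∧
    (∀ x ∉ X, ∀ y ∉ X, (p.strict {x} {y} ↔ p'.strict {x} {y})) ∧
    (∀ x ∈ X, ∀ y ∉ X, p'.strict {y} {x})

/-- `p'` is a drop strategy for `p`: a single object `x ∉ ωi` is moved to the bottom. -/
def DropStrategy (ωi : Finset O) (p p' : Pref O) : Prop :=
  ∃ x : O, x ∉ ωi ∧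
    (∀ u v : O, u ≠ x → v ≠ x → (p.strict {u} {v} ↔ p'.strict {u} {v})) ∧
    (∀ y : O, y ≠ x → p'.strict {y} {x})

/-- `p'` is a truncation strategy for `p`: the tail set
`{o ∈ O ∖ ωi : {x} R {o}}` (for some object `x`) is moved to the bottom. -/
def TruncationStrategy (ωi : Finset O) (p p' : Pref O) : Prop :=
  ∃ x : O,
    (∀ u v : O, (u ∉ ωi ∧ p.weak {x} {u}) → (v ∉ ωi ∧ p.weak {x} {v}) →
      (p.strict {u} {v} ↔ p'.strict {u} {v})) ∧
    (∀ u v : O, ¬(u ∉ ωi ∧ p.weak {x} {u}) → ¬(v ∉ ωi ∧ p.weak {x} {v}) →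
      (p.strict {u} {v} ↔ p'.strict {u} {v})) ∧
    (∀ u v : O, (u ∉ ωi ∧ p.weak {x} {u}) → ¬(v ∉ ωi ∧ p.weak {x} {v}) →
      p'.strict {v} {u})

/-- There is a Pareto-improving trading cycle at the assignment `μ`:
a cyclic sequence of `k+1 ≥ 1` distinct objects and distinct agents, each object owned
(at `μ`) by its agent, such that every agent on the cycle strictly gains by swapping
the object she relinquishes for the object she points to. -/
def ParetoImprovingCycleAt [DecidableEq O] (pref : N → Pref O) (μ : N → Finset O) : Prop :=
  ∃ (k : ℕ) (obj : Fin (k + 1) → O) (ag : Fin (k + 1) → N),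
    Function.Injective obj ∧ Function.Injective ag ∧
    (∀ ℓ : Fin (k + 1), obj ℓ ∈ μ (ag ℓ)) ∧
    (∀ ℓ : Fin (k + 1),
      (pref (ag ℓ)).strict ((insert (obj (ℓ + 1)) (μ (ag ℓ))).erase (obj ℓ)) (μ (ag ℓ)))

/-- Individual-good efficiency of an assignment at a profile. -/
def IGEat [DecidableEq O] (pref : N → Pref O) (μ : N → Finset O) : Prop :=
  ¬ ParetoImprovingCycleAt pref μ

/-- `ν` Pareto dominates `μ` at the profile `pref`. -/
def ParetoDominates (pref : N → Pref O) (ν μ : N → Finset O) : Prop :=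
  (∀ i, (pref i).weak (ν i) (μ i)) ∧ ∃ j, (pref j).strict (ν j) (μ j)

/-- Pareto efficiency of an assignment at a profile. -/
def ParetoEffAt (pref : N → Pref O) (μ : N → Finset O) : Prop :=
  ∀ ν : Allocation N O, ¬ ParetoDominates pref ν.bundle μ

/-- The marginally most-preferred object of a (nonempty) finite set of objects. -/
noncomputable def Pref.best [Nonempty O] (p : Pref O) (S : Finset O) : O :=
  if h : ∃ x : O, x ∈ S ∧ ∀ y ∈ S, p.weak {x} {y} then h.choose
  else Classical.arbitrary O

/-- The conditionally most-preferred object of `S` given the already-held bundle `Y`. -/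
noncomputable def Pref.cbest [Nonempty O] [DecidableEq O] (p : Pref O) (S Y : Finset O) : O :=
  if h : ∃ x : O, x ∈ S ∧ ∀ Z : Finset O, Z ⊆ S.erase x → p.strict (insert x Y) (Y ∪ Z)
  then h.choose else Classical.arbitrary O

/-- The initial owner of an object. -/
noncomputable def Allocation.owner (ω : Allocation N O) (o : O) : N :=
  (ω.cover o).choose

/-- One pass of the generalized TTC algorithm, with fuel.  At each step every agent points
to her marginally best remaining object and every remaining object points to its owner;
the objects lying on cycles of this functional graph (the periodic points of `g`) are
traded: the owner of a cycling object receives the object she points to. -/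
noncomputable def TTCaux [Nonempty O] [DecidableEq O] (pref : N → Pref O) (own : O → N) :
    ℕ → Finset O → N → Finset O
  | 0, _, _ => ∅
  | fuel + 1, S, i =>
      let g : O → O := fun o => (pref (own o)).best S
      let C : Finset O := S.filter fun o => ∃ k : ℕ, 0 < k ∧ g^[k] o = o
      if S.Nonempty then
        ((C.filter fun o => own o = i).image g) ∪ TTCaux pref own fuel (S \ C) i
      else ∅

/-- The generalized Top Trading Cycles rule: the bundle received by agent `i`. -/
noncomputable def TTC [Fintype O] [Nonempty O] [DecidableEq O]
    (pref : N → Pref O) (ω : Allocation N O) (i : N) : Finset O :=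
  TTCaux pref ω.owner (Fintype.card O + 1) Finset.univ i

/-- One pass of the Augmented TTC algorithm, with fuel: agents point to their
conditionally most-preferred remaining object given the bundle assigned so far. -/
noncomputable def ATTCaux [Nonempty O] [DecidableEq O] (pref : N → Pref O) (own : O → N) :
    ℕ → Finset O → (N → Finset O) → N → Finset O
  | 0, _, μ => μ
  | fuel + 1, S, μ =>
      let g : O → O := fun o => (pref (own o)).cbest S (μ (own o))
      let C : Finset O := S.filter fun o => ∃ k : ℕ, 0 < k ∧ g^[k] o = o
      if S.Nonempty then
        ATTCaux pref own fuel (S \ C) (fun j => μ j ∪ ((C.filter fun o => own o = j).image g))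
      else μ

/-- The Augmented Top Trading Cycles rule: the bundle received by agent `i`. -/
noncomputable def ATTC [Fintype O] [Nonempty O] [DecidableEq O]
    (pref : N → Pref O) (ω : Allocation N O) (i : N) : Finset O :=
  ATTCaux pref ω.owner (Fintype.card O + 1) Finset.univ (fun _ => ∅) i

/-- Conditional marginal preference of `p` given the bundle `Y`:
`x` is conditionally better than `y`. -/
def CMarg [DecidableEq O] (p : Pref O) (Y : Finset O) (x y : O) : Prop :=
  p.strict ((insert x Y).erase y) ((insert y Y).erase x)

/-- Weak conditional marginal preference. -/
def CMargWeak [DecidableEq O] (p : Pref O) (Y : Finset O) (x y : O) : Prop :=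
  CMarg p Y x y ∨ x = y

/-- Drop strategy on the conditionally lexicographic domain: `x ∉ ωi` becomes the worst,
with preferences over bundles avoiding `x` unchanged. -/
def DropStrategyCL (ωi : Finset O) (p p' : Pref O) : Prop :=
  ∃ x : O, x ∉ ωi ∧
    (∀ Y : Finset O, Y.Nonempty → x ∉ Y → p'.strict Y {x}) ∧
    (∀ Y Z : Finset O, x ∉ Y → x ∉ Z → (p'.strict Y Z ↔ p.strict Y Z))

section Rules

variable [DecidableEq O]

/-- Balancedness of a rule on the domain `D`. -/
def RBAL (D : Pref O → Prop) (ω : Allocation N O)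
    (φ : (N → Pref O) → Allocation N O) : Prop :=
  ∀ P : N → Pref O, (∀ i, D (P i)) → ∀ i, ((φ P).bundle i).card = (ω.bundle i).card

/-- Individual-good efficiency of a rule on the domain `D`. -/
def RIGE (D : Pref O → Prop) (φ : (N → Pref O) → Allocation N O) : Prop :=
  ∀ P : N → Pref O, (∀ i, D (P i)) → IGEat P ((φ P).bundle)

/-- Pareto efficiency of a rule on the domain `D`. -/
def RPE (D : Pref O → Prop) (φ : (N → Pref O) → Allocation N O) : Prop :=
  ∀ P : N → Pref O, (∀ i, D (P i)) → ParetoEffAt P ((φ P).bundle)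

/-- Individual rationality of a rule on the domain `D`. -/
def RIR (D : Pref O → Prop) (ω : Allocation N O)
    (φ : (N → Pref O) → Allocation N O) : Prop :=
  ∀ P : N → Pref O, (∀ i, D (P i)) → ∀ i, (P i).weak ((φ P).bundle i) (ω.bundle i)

/-- The worst-endowment lower bound of a rule on the domain `D`: no agent receives an
object marginally worse than the marginally worst object of her endowment. -/
def RWELB (D : Pref O → Prop) (ω : Allocation N O)
    (φ : (N → Pref O) → Allocation N O) : Prop :=
  ∀ P : N → Pref O, (∀ i, D (P i)) → ∀ i, ∀ o ∈ (φ P).bundle i,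
    ∀ w ∈ ω.bundle i, (∀ y ∈ ω.bundle i, (P i).weak {y} {w}) → (P i).weak {o} {w}

/-- Marginality of a rule on the domain `D`. -/
def RMAR (D : Pref O → Prop) (φ : (N → Pref O) → Allocation N O) : Prop :=
  ∀ P P' : N → Pref O, (∀ i, D (P i)) → (∀ i, D (P' i)) →
    (∀ i, MargEq (P i) (P' i)) → ∀ i, (φ P).bundle i = (φ P').bundle i

variable [DecidableEq N]

/-- Truncation-proofness of a rule on the domain `D`. -/
def RTP (D : Pref O → Prop) (ω : Allocation N O)
    (φ : (N → Pref O) → Allocation N O) : Prop :=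
  ∀ P : N → Pref O, (∀ i, D (P i)) → ∀ i : N, ∀ p' : Pref O, D p' →
    TruncationStrategy (ω.bundle i) (P i) p' →
    (P i).weak ((φ P).bundle i) ((φ (Function.update P i p')).bundle i)

/-- Drop strategy-proofness of a rule on the domain `D`. -/
def RDSP (D : Pref O → Prop) (ω : Allocation N O)
    (φ : (N → Pref O) → Allocation N O) : Prop :=
  ∀ P : N → Pref O, (∀ i, D (P i)) → ∀ i : N, ∀ p' : Pref O, D p' →
    DropStrategy (ω.bundle i) (P i) p' →
    (P i).weak ((φ P).bundle i) ((φ (Function.update P i p')).bundle i)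

/-- Subset-drop strategy-proofness of a rule on the domain `D`. -/
def RSDSP (D : Pref O → Prop) (ω : Allocation N O)
    (φ : (N → Pref O) → Allocation N O) : Prop :=
  ∀ P : N → Pref O, (∀ i, D (P i)) → ∀ i : N, ∀ p' : Pref O, D p' →
    SubsetDropStrategy (ω.bundle i) (P i) p' →
    (P i).weak ((φ P).bundle i) ((φ (Function.update P i p')).bundle i)

/-- Worst-endowment lower bound on the conditionally lexicographic domain, formulated
with conditional marginal preferences. -/
def RWELBCL (D : Pref O → Prop) (ω : Allocation N O)
    (φ : (N → Pref O) → Allocation N O) : Prop :=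
  ∀ P : N → Pref O, (∀ i, D (P i)) → ∀ i, ∀ o ∈ (φ P).bundle i,
    ∀ w ∈ ω.bundle i,
      (∀ y ∈ ω.bundle i, CMargWeak (P i) ((φ P).bundle i) y w) →
      CMargWeak (P i) ((φ P).bundle i) o w

/-- Drop strategy-proofness on the conditionally lexicographic domain. -/
def RDSPCL (D : Pref O → Prop) (ω : Allocation N O)
    (φ : (N → Pref O) → Allocation N O) : Prop :=
  ∀ P : N → Pref O, (∀ i, D (P i)) → ∀ i : N, ∀ p' : Pref O, D p' →
    DropStrategyCL (ω.bundle i) (P i) p' →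
    (P i).weak ((φ P).bundle i) ((φ (Function.update P i p')).bundle i)

end Rules

/-- Agent `i`'s opportunity set under TTC when reporting `p`: the set of bundles
she may receive as others' (responsive) reports vary. -/
def Opp [Fintype O] [Nonempty O] [DecidableEq O] (ω : Allocation N O) (i : N)
    (p : Pref O) : Set (Finset O) :=
  {A | ∃ Q : N → Pref O, (∀ j, Responsive (Q j)) ∧ Q i = p ∧ TTC Q ω i = A}

/-!
Under WELB an agent never receives an object she ranks below her whole endowment. Hence, once a set
`X` of non-endowed objects has been moved to the bottom of her ranking, her bundle avoids `X`, and
two lexicographic preferences that agree outside `X` compare such bundles in the same way.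

A subset-drop is a succession of single drops: if `x` is the worst object of `X` in the final report
`q`, let `r` be the lexicographic report that demotes only `X \ {x}`, ordered as in `q`. Then `q` is
a drop strategy for `r`. By DSP, `q` does not improve on `r` according to `r`; neither bundle meets
`X \ {x}`, so the same holds according to the true preference, and induction on `X` compares `r`
with the truth.
-/

theorem Pref.asymm (p : Pref O) {X Y : Finset O} (h : p.strict X Y) : ¬ p.strict Y X :=
  fun h' => p.irrefl X (p.trans X Y X h h')

theorem Pref.weak_trans (p : Pref O) {X Y Z : Finset O} (hXY : p.weak X Y) (hYZ : p.weak Y Z) :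
    p.weak X Z := by
  rcases hXY with hXY | rfl
  · rcases hYZ with hYZ | rfl
    · exact .inl (p.trans X Y Z hXY hYZ)
    · exact .inl hXY
  · exact hYZ

instance Pref.isStrictTotalOrder_singleton (p : Pref O) :
    IsStrictTotalOrder O fun x y => p.strict {x} {y} where
  trichotomous x y hxy hyx := by
    simpa [hxy, hyx] using p.total {x} {y}
  irrefl x := p.irrefl {x}
  trans x y z := p.trans {x} {y} {z}

theorem Pref.exists_worst (p : Pref O) {S : Finset O} (hS : S.Nonempty) :
    ∃ w ∈ S, ∀ y ∈ S, p.weak {y} {w} := by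
  let := linearOrderOfSTO (Function.swap fun x y : O => p.strict {x} {y})
  refine ⟨S.min' hS, S.min'_mem hS, fun y hy => ?_⟩
  exact (S.min'_le y hy).lt_or_eq.imp id fun h => by rw [h]

section Lexicographic

/-- The lexicographic preference over bundles generated by a linear order on objects, in which
larger objects are better: bundles are compared in the colexicographic order. -/
def lexPref (O : Type) [LinearOrder O] : Pref O where
  strict X Y := toColex Y < toColex X
  total X Y := by
    rcases lt_trichotomy (toColex Y) (toColex X) with h | h | h
    · exact .inl h
    · exact .inr (.inl (toColex_inj.1 h).symm)
    · exact .inr (.inr h)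
  irrefl _ := lt_irrefl _
  trans _ _ _ hXY hYZ := hYZ.trans hXY

theorem lexPref_strict_singleton [LinearOrder O] {x y : O} :
    (lexPref O).strict {x} {y} ↔ y < x :=
  Finset.Colex.singleton_lt_singleton

variable [DecidableEq O]

theorem lexicographic_lexPref [LinearOrder O] : Lexicographic (lexPref O) := by
  intro X Y _
  simp only [lexPref_strict_singleton]
  constructor
  · intro h
    obtain ⟨a, haX, haY, ha⟩ := Finset.Colex.toColex_lt_toColex_iff_exists_forall_lt.1 h
    have haXY : a ∈ X \ Y := Finset.mem_sdiff.2 ⟨haX, haY⟩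
    obtain ⟨x, hx, hmax⟩ := (X \ Y).exists_max_image id ⟨a, haXY⟩
    refine ⟨x, hx, fun y hy hyx => ?_⟩
    rcases Finset.mem_union.1 hy with hy | hy
    · exact lt_of_le_of_ne (hmax y hy) hyx
    · have ⟨hyY, hyX⟩ := Finset.mem_sdiff.1 hy
      exact (ha y hyY hyX).trans_le (hmax a haXY)
  · rintro ⟨x, hx, hbest⟩
    rw [Finset.mem_sdiff] at hx
    refine Finset.Colex.toColex_lt_toColex_iff_exists_forall_lt.2
      ⟨x, hx.1, hx.2, fun y hyY hyX => hbest y (by simp [hyY, hyX]) ?_⟩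
    exact (ne_of_mem_of_not_mem hx.1 hyX).symm

theorem exists_lexicographic_strict_singleton_iff (r : O → O → Prop) [IsStrictTotalOrder O r] :
    ∃ p : Pref O, Lexicographic p ∧ ∀ x y, p.strict {x} {y} ↔ r x y := by
  let := linearOrderOfSTO (Function.swap r)
  exact ⟨lexPref O, lexicographic_lexPref, fun _ _ => lexPref_strict_singleton⟩

variable {p q : Pref O}

theorem Lexicographic.strict_iff_strict (hp : Lexicographic p) (hq : Lexicographic q)
    {A B : Finset O}
    (h : ∀ x ∈ A ∪ B, ∀ y ∈ A ∪ B, (p.strict {x} {y} ↔ q.strict {x} {y})) :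
    p.strict A B ↔ q.strict A B := by
  obtain rfl | hAB := eq_or_ne A B
  · simp only [p.irrefl, q.irrefl]
  rw [hp A B hAB, hq A B hAB]
  have hsub : A \ B ∪ B \ A ⊆ A ∪ B :=
    Finset.union_subset_union Finset.sdiff_subset Finset.sdiff_subset
  refine exists_congr fun x => and_congr_right fun hx => forall₂_congr fun y hy => ?_
  rw [h x (hsub (Finset.mem_union_left _ hx)) y (hsub hy)]

theorem Lexicographic.eq_of_margEq (hp : Lexicographic p) (hq : Lexicographic q)
    (h : MargEq p q) : p = q := by
  have hstrict : p.strict = q.strict := by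
    ext A B
    exact hp.strict_iff_strict hq fun x _ y _ => h x y
  cases p
  cases q
  congr

end Lexicographic

section Demotion

/-- `q` arises from `p` by moving the objects of `X` to the bottom of the marginal ranking. In
contrast to `SubsetDropStrategy`, the order of the objects within `X` is left free. -/
structure IsDemotion (X : Finset O) (p q : Pref O) : Prop where
  strict_iff : ∀ x ∉ X, ∀ y ∉ X, (p.strict {x} {y} ↔ q.strict {x} {y})
  strict_of_mem : ∀ x ∈ X, ∀ y ∉ X, q.strict {y} {x}

variable {X : Finset O} {p q r : Pref O}

theorem IsDemotion.margEq (h : IsDemotion ∅ p q) : MargEq p q :=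
  fun x y => h.strict_iff x (Finset.notMem_empty x) y (Finset.notMem_empty y)

variable [DecidableEq O]

theorem IsDemotion.weak_iff_weak (h : IsDemotion X p q) (hp : Lexicographic p)
    (hq : Lexicographic q) {A B : Finset O} (hA : Disjoint X A) (hB : Disjoint X B) :
    p.weak A B ↔ q.weak A B := by
  have hAB : Disjoint (A ∪ B) X := (Finset.disjoint_union_right.2 ⟨hA, hB⟩).symm
  refine or_congr_left (hp.strict_iff_strict hq fun x hx y hy => ?_)
  exact h.strict_iff x (Finset.disjoint_left.1 hAB hx) y (Finset.disjoint_left.1 hAB hy)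

theorem exists_isDemotion (X : Finset O) (p q : Pref O) :
    ∃ r : Pref O, Lexicographic r ∧ IsDemotion X p r ∧
      ∀ x ∈ X, ∀ y ∈ X, (r.strict {x} {y} ↔ q.strict {x} {y}) := by
  let better (x y : O) : Prop :=
    if x ∈ X then y ∈ X ∧ q.strict {x} {y} else y ∈ X ∨ p.strict {x} {y}
  have : IsStrictTotalOrder O better :=
    { trichotomous := fun x y => by
        have := p.total {x} {y}
        have := q.total {x} {y}
        grind [Finset.singleton_inj]
      irrefl := by grind [p.irrefl, q.irrefl]
      trans := fun x y z => by
        have := p.trans {x} {y} {z}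
        have := q.trans {x} {y} {z}
        grind }
  obtain ⟨r, hr, hbetter⟩ := exists_lexicographic_strict_singleton_iff better
  refine ⟨r, hr, ⟨fun x hx y hy => ?_, fun x hx y hy => ?_⟩, fun x hx y hy => ?_⟩ <;>
    simp [hbetter, better, hx, hy]

theorem IsDemotion.dropStrategy {ωi : Finset O} {x : O} (hq : IsDemotion X p q)
    (hr : IsDemotion (X.erase x) p r)
    (hrq : ∀ u ∈ X.erase x, ∀ v ∈ X.erase x, (r.strict {u} {v} ↔ q.strict {u} {v}))
    (hx : x ∈ X) (hworst : ∀ y ∈ X, q.weak {y} {x}) (hxω : x ∉ ωi) :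
    DropStrategy ωi r q := by
  refine ⟨x, hxω, fun u v hux hvx => ?_, fun y hyx => ?_⟩
  · have hmem {z : O} (hz : z ≠ x) : z ∈ X.erase x ↔ z ∈ X := by simp [hz]
    by_cases hu : u ∈ X.erase x <;> by_cases hv : v ∈ X.erase x
    · exact hrq u hu v hv
    · have hvu_r := hr.strict_of_mem u hu v hv
      have hvu_q := hq.strict_of_mem u ((hmem hux).1 hu) v (mt (hmem hvx).2 hv)
      exact iff_of_false (r.asymm hvu_r) (q.asymm hvu_q)
    · exact iff_of_true (hr.strict_of_mem v hv u hu)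
        (hq.strict_of_mem v ((hmem hvx).1 hv) u (mt (hmem hux).2 hu))
    · rw [← hr.strict_iff u hu v hv,
        hq.strict_iff u (mt (hmem hux).2 hu) v (mt (hmem hvx).2 hv)]
  · by_cases hy : y ∈ X
    · exact (hworst y hy).resolve_right (by simpa using hyx)
    · exact hq.strict_of_mem x hx y hy

end Demotion

theorem RWELB.notMem_bundle {D : Pref O → Prop} {ω : Allocation N O}
    {φ : (N → Pref O) → Allocation N O} (hφ : RWELB D ω φ) {P : N → Pref O}
    (hP : ∀ i, D (P i)) {i : N} {x : O} (hx : ∀ y ∈ ω.bundle i, (P i).strict {y} {x}) :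
    x ∉ (φ P).bundle i := by
  intro hmem
  obtain ⟨w, hw, hworst⟩ := (P i).exists_worst (ω.nonempty i)
  rcases hφ P hP i x hmem w hw hworst with h | h
  · exact (P i).asymm h (hx w hw)
  · exact (P i).irrefl {w} (h ▸ hx w hw)

theorem RWELB.disjoint_bundle_of_isDemotion {D : Pref O → Prop} {ω : Allocation N O}
    {φ : (N → Pref O) → Allocation N O} (hφ : RWELB D ω φ) {P : N → Pref O}
    (hP : ∀ i, D (P i)) {i : N} {X : Finset O} (hX : Disjoint X (ω.bundle i)) {p : Pref O}
    (h : IsDemotion X p (P i)) : Disjoint X ((φ P).bundle i) :=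
  Finset.disjoint_left.2 fun x hx => hφ.notMem_bundle hP fun y hy =>
    h.strict_of_mem x hx y (Finset.disjoint_right.1 hX hy)

theorem stmt2_general [DecidableEq N] [DecidableEq O] {ω : Allocation N O}
    {φ : (N → Pref O) → Allocation N O}
    (hDSP : RDSP Lexicographic ω φ) (hWELB : RWELB Lexicographic ω φ)
    {P : N → Pref O} (hP : ∀ j, Lexicographic (P j)) {i : N}
    {X : Finset O} (hX : Disjoint X (ω.bundle i))
    {q : Pref O} (hq : Lexicographic q) (hPq : IsDemotion X (P i) q) :
    (P i).weak ((φ P).bundle i) ((φ (Function.update P i q)).bundle i) := by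
  have hupdate {r : Pref O} (hr : Lexicographic r) (j : N) :
      Lexicographic (Function.update P i r j) :=
    (Function.forall_update_iff P fun _ p => Lexicographic p).2 ⟨hr, fun j _ => hP j⟩ j
  induction X using Finset.eraseInduction generalizing q with | H X ih =>
  obtain rfl | hXne := X.eq_empty_or_nonempty
  · obtain rfl : P i = q := (hP i).eq_of_margEq hq hPq.margEq
    exact .inr (by rw [Function.update_eq_self])
  obtain ⟨x, hx, hworst⟩ := q.exists_worst hXne
  obtain ⟨r, hr, hPr, hrq⟩ := exists_isDemotion (X.erase x) (P i) q
  have hXx : Disjoint (X.erase x) (ω.bundle i) := hX.mono_left (X.erase_subset x)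
  have hdrop : DropStrategy (ω.bundle i) r q :=
    hPq.dropStrategy hPr hrq hx hworst (Finset.disjoint_left.1 hX hx)
  have hstep : r.weak ((φ (Function.update P i r)).bundle i)
      ((φ (Function.update P i q)).bundle i) := by
    simpa using hDSP _ (hupdate hr) i q hq (by simpa using hdrop)
  have havoid_r : Disjoint (X.erase x) ((φ (Function.update P i r)).bundle i) :=
    hWELB.disjoint_bundle_of_isDemotion (hupdate hr) hXx (by simpa using hPr)
  have havoid_q : Disjoint X ((φ (Function.update P i q)).bundle i) :=
    hWELB.disjoint_bundle_of_isDemotion (hupdate hq) hX (by simpa using hPq)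
  refine (P i).weak_trans (ih x hx hXx hr hPr) ?_
  exact (hPr.weak_iff_weak (hP i) hr havoid_r (havoid_q.mono_left (X.erase_subset x))).2 hstep

/-- On the lexicographic domain, every rule satisfying DSP and WELB
also satisfies SDSP. -/
theorem stmt2 {N O : Type} [Fintype N] [Fintype O] [DecidableEq N] [DecidableEq O]
    (hN : 2 ≤ Fintype.card N) (hNO : Fintype.card N ≤ Fintype.card O)
    (ω : Allocation N O) (φ : (N → Pref O) → Allocation N O)
    (hDSP : RDSP Lexicographic ω φ) (hWELB : RWELB Lexicographic ω φ) :
    RSDSP Lexicographic ω φ := by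
  rintro P hP i q hq ⟨X, hXω, -, hout, hbot⟩
  exact stmt2_general hDSP hWELB hP (X := X.toFinset)
    (by simpa [Finset.disjoint_left] using hXω) hq ⟨by simpa using hout, by simpa using hbot⟩

end Realloc
end

section
/- Let N = {1,2}, O = {a,b,c,d}, and let the endowment be ω_1 = {a,d} and ω_2 = {b,c}. Then no rule on the responsive domain ℛ simultaneously satisfies Pareto efficiency (PE), individual rationality (IR), and marginality (MAR). -/
attribute [local instance] Classical.propDecidable

namespace Realloc

variable {N O : Type}

/-!
Take two additive preferences with the same marginal ranking `a, b, c, d`, of which the first ranks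
`{a, d}` above `{b, c}` and the second `{b, c}` above `{a, d}`. Choose the utilities so that, in
addition, each object is worth more to its owner than to the other agent. Then the endowment is the
unique maximizer of total utility, hence the only individually rational allocation. Exchanging the
two preferences leaves the marginal preferences unchanged, so a marginal rule still returns the
endowment; but now each agent prefers the endowment of the other, contradicting efficiency.
-/

section Additive

variable {M : Type*} [AddCommMonoid M] [LinearOrder M]

/-- The additive preference with object utilities `u`. Injectivity of the utility of bundles
makes the preference strict. -/
def Pref.additive (u : O → M) (hu : Function.Injective fun X : Finset O => ∑ o ∈ X, u o) :
    Pref O where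
  strict X Y := ∑ o ∈ Y, u o < ∑ o ∈ X, u o
  total X Y := by
    rcases lt_trichotomy (∑ o ∈ Y, u o) (∑ o ∈ X, u o) with hlt | heq | hgt
    · exact Or.inl hlt
    · exact Or.inr (Or.inl (hu heq.symm))
    · exact Or.inr (Or.inr hgt)
  irrefl _ := lt_irrefl _
  trans _ _ _ hXY hYZ := hYZ.trans hXY

theorem Pref.weak_additive_iff {u : O → M}
    {hu : Function.Injective fun X : Finset O => ∑ o ∈ X, u o} {X Y : Finset O} :
    (Pref.additive u hu).weak X Y ↔ ∑ o ∈ Y, u o ≤ ∑ o ∈ X, u o :=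
  (le_iff_lt_or_eq.trans (or_congr_right (eq_comm.trans hu.eq_iff))).symm

theorem Pref.margEq_additive {u v : O → M}
    {hu : Function.Injective fun X : Finset O => ∑ o ∈ X, u o}
    {hv : Function.Injective fun X : Finset O => ∑ o ∈ X, v o}
    (h : ∀ x y, u x < u y ↔ v x < v y) : MargEq (Pref.additive u hu) (Pref.additive v hv) := by
  intro x y
  simpa only [Pref.additive, Finset.sum_singleton] using h y x

theorem Pref.responsive_additive [IsOrderedCancelAddMonoid M] [DecidableEq O] (u : O → M)
    (hu : Function.Injective fun X : Finset O => ∑ o ∈ X, u o) :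
    Responsive (Pref.additive u hu) := by
  intro X y z hy hz
  simp only [Pref.additive, Finset.sum_insert hy, Finset.sum_insert hz, Finset.sum_singleton,
    add_lt_add_iff_right]

end Additive

namespace Allocation

theorem mem_bundle_iff (μ : Allocation N O) {o : O} {i : N} :
    o ∈ μ.bundle i ↔ μ.owner o = i := by
  have mem_owner : o ∈ μ.bundle (μ.owner o) := (μ.cover o).choose_spec
  refine ⟨fun hi => ?_, fun h => h ▸ mem_owner⟩
  by_contra hne
  exact μ.disj _ _ hne o mem_owner hi

theorem sum_sum_bundle {M : Type*} [AddCommMonoid M] [Fintype N] [Fintype O]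
    (μ : Allocation N O) (u : N → O → M) :
    ∑ i, ∑ o ∈ μ.bundle i, u i o = ∑ o, u (μ.owner o) o := by
  rw [Finset.sum_comm' (t' := Finset.univ) (s' := fun o => {μ.owner o})
    fun i o => by simp [mem_bundle_iff, eq_comm]]
  simp only [Finset.sum_singleton]

-- By `h` the total utility of `μ` is at least that of `ω`, which maximizes it object by object.
theorem bundle_eq_of_forall_sum_le {M : Type*} [AddCommMonoid M] [LinearOrder M]
    [IsOrderedCancelAddMonoid M] [Finite N] [Finite O] {ω μ : Allocation N O} {u : N → O → M}
    (hu : ∀ i, ∀ o ∈ ω.bundle i, ∀ j ≠ i, u j o < u i o)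
    (h : ∀ i, ∑ o ∈ ω.bundle i, u i o ≤ ∑ o ∈ μ.bundle i, u i o) : μ.bundle = ω.bundle := by
  cases nonempty_fintype N
  cases nonempty_fintype O
  have lt_of_ne (o : O) (hne : μ.owner o ≠ ω.owner o) : u (μ.owner o) o < u (ω.owner o) o :=
    hu _ o (ω.mem_bundle_iff.2 rfl) _ hne
  have le (o : O) : u (μ.owner o) o ≤ u (ω.owner o) o := by
    by_cases heq : μ.owner o = ω.owner o
    · rw [heq]
    · exact (lt_of_ne o heq).le
  have total_le : ∑ o, u (ω.owner o) o ≤ ∑ o, u (μ.owner o) o := by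
    rw [← sum_sum_bundle, ← sum_sum_bundle]
    exact Finset.sum_le_sum fun i _ => h i
  have utility_eq (o : O) : u (μ.owner o) o = u (ω.owner o) o :=
    (Finset.sum_eq_sum_iff_of_le fun o _ => le o).1
      ((Finset.sum_le_sum fun o _ => le o).antisymm total_le) o (Finset.mem_univ o)
  have owner_eq (o : O) : μ.owner o = ω.owner o := by
    by_contra hne
    exact (lt_of_ne o hne).ne (utility_eq o)
  ext i o
  rw [mem_bundle_iff, mem_bundle_iff, owner_eq]

/-- The allocation in which agent `i` receives the bundle that `μ` gives to `σ i`; it models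
trades of entire bundles. -/
def permute (σ : Equiv.Perm N) (μ : Allocation N O) : Allocation N O where
  bundle i := μ.bundle (σ i)
  nonempty i := μ.nonempty (σ i)
  disj _ _ hij := μ.disj _ _ (σ.injective.ne hij)
  cover o := (μ.cover o).imp' σ.symm fun i hi => by rwa [σ.apply_symm_apply]

end Allocation

theorem not_RPE_and_RIR_and_RMAR_of_permute [Nonempty N] {D : Pref O → Prop}
    {ω : Allocation N O} {P : N → Pref O} {σ : Equiv.Perm N} (hP : ∀ i, D (P i))
    (hIR : ∀ μ : Allocation N O,
      (∀ i, (P i).weak (μ.bundle i) (ω.bundle i)) → μ.bundle = ω.bundle)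
    (hmarg : ∀ i, MargEq (P i) (P (σ i)))
    (htrade : ∀ i, (P (σ i)).strict (ω.bundle (σ i)) (ω.bundle i))
    (φ : (N → Pref O) → Allocation N O) : ¬ (RPE D φ ∧ RIR D ω φ ∧ RMAR D φ) := by
  rintro ⟨pe, ir, mar⟩
  have endowment_at_permuted : (φ fun i => P (σ i)).bundle = ω.bundle := by
    rw [← hIR _ (ir P hP)]
    exact funext fun i => (mar P _ hP (fun i => hP (σ i)) hmarg i).symm
  refine pe (fun i => P (σ i)) (fun i => hP (σ i)) (ω.permute σ) ?_
  rw [endowment_at_permuted]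
  exact ⟨fun i => Or.inl (htrade i), Classical.arbitrary N, htrade _⟩

section Utility

-- `decide` cannot evaluate the classical instance, which would otherwise take precedence.
attribute [-instance] Classical.propDecidable

/-- The utilities `utility i o` of the two agents for the objects `a, b, c, d`. The constants are
chosen so that distinct bundles have distinct utilities, both agents rank `a, b, c, d` in this
order, the first agent values exactly `a` and `d` more than the second does, and each agent
prefers her own endowment to that of the other. -/
def utility : Fin 2 → Fin 4 → ℕ := ![![16, 8, 4, 2], ![12, 10, 6, 1]]

theorem sum_utility_injective (i : Fin 2) :
    Function.Injective fun X : Finset (Fin 4) => ∑ o ∈ X, utility i o := by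
  revert i
  decide

theorem utility_strictAnti (i : Fin 2) : StrictAnti (utility i) := by
  rw [Fin.strictAnti_iff_succ_lt]
  revert i
  decide

end Utility

theorem utility_lt_of_mem {ω : Allocation (Fin 2) (Fin 4)}
    (hω1 : ω.bundle 0 = {0, 3}) (hω2 : ω.bundle 1 = {1, 2}) :
    ∀ i, ∀ o ∈ ω.bundle i, ∀ j ≠ i, utility j o < utility i o := by
  simp [Fin.forall_fin_two, hω1, hω2, utility]

theorem sum_utility_lt_sum_utility_swap {ω : Allocation (Fin 2) (Fin 4)}
    (hω1 : ω.bundle 0 = {0, 3}) (hω2 : ω.bundle 1 = {1, 2}) (i : Fin 2) :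
    ∑ o ∈ ω.bundle i, utility (Equiv.swap 0 1 i) o <
      ∑ o ∈ ω.bundle (Equiv.swap 0 1 i), utility (Equiv.swap 0 1 i) o := by
  revert i
  simp [Fin.forall_fin_two, hω1, hω2, utility]

theorem stmt4_general {D : Pref (Fin 4) → Prop}
    (hD : ∀ (u : Fin 4 → ℕ) (hu : Function.Injective fun X : Finset (Fin 4) => ∑ o ∈ X, u o),
      D (Pref.additive u hu))
    (ω : Allocation (Fin 2) (Fin 4))
    (hω1 : ω.bundle 0 = {0, 3}) (hω2 : ω.bundle 1 = {1, 2})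
    (φ : (Fin 2 → Pref (Fin 4)) → Allocation (Fin 2) (Fin 4)) :
    ¬ (RPE D φ ∧ RIR D ω φ ∧ RMAR D φ) := by
  let P (i : Fin 2) : Pref (Fin 4) := Pref.additive (utility i) (sum_utility_injective i)
  refine not_RPE_and_RIR_and_RMAR_of_permute (P := P) (σ := Equiv.swap 0 1)
    (fun i => hD _ _) (fun μ hμ => ?_) (fun i => ?_) (sum_utility_lt_sum_utility_swap hω1 hω2) φ
  · exact Allocation.bundle_eq_of_forall_sum_le (utility_lt_of_mem hω1 hω2)
      fun i => Pref.weak_additive_iff.1 (hμ i)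
  · exact Pref.margEq_additive fun x y => by
      rw [(utility_strictAnti i).lt_iff_gt, (utility_strictAnti _).lt_iff_gt]

/-- With N = {1,2}, O = {a,b,c,d} (encoded as `Fin 2`, `Fin 4` with
a,b,c,d = 0,1,2,3), ω₁ = {a,d}, ω₂ = {b,c}, no rule on the responsive domain satisfies
PE, IR and MAR simultaneously. -/
theorem stmt4 (ω : Allocation (Fin 2) (Fin 4))
    (hω1 : ω.bundle 0 = {0, 3}) (hω2 : ω.bundle 1 = {1, 2})
    (φ : (Fin 2 → Pref (Fin 4)) → Allocation (Fin 2) (Fin 4)) :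
    ¬ (RPE Responsive φ ∧ RIR Responsive ω φ ∧ RMAR Responsive φ) :=
  stmt4_general (fun u hu => Pref.responsive_additive u hu) ω hω1 hω2 φ

end Realloc
end
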